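/- Let X be a metrizable Souslin space and B a countable family of conditioning events. Then Δ^B(X) is a Souslin space; if moreover X is Lusin, then Δ^B(X) is a Lusin space (even when the elements of B are not clopen). -/

import Mathlib

open MeasureTheory Set TopologicalSpace

/-- A conditional probability system on `(X, Σ_X, 𝓑)`: a family of probability measures
`μ(·|B)`, `B ∈ 𝓑`, with `μ(B|B) = 1` and the chain rule
`μ(A|B)·μ(B|C) = μ(A|C)` whenever `A ⊆ B ⊆ C`, `A` measurable, `B, C ∈ 𝓑`. -/
def IsCPS {X : Type*} [MeasurableSpace X] (𝓑 : Set (Set X)) (μ : 𝓑 → ProbabilityMeasure X) : Prop :=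
  (∀ B : 𝓑, (μ B : Measure X) (B : Set X) = 1) ∧
  ∀ (A : Set X) (B C : 𝓑), MeasurableSet A → A ⊆ (B : Set X) → (B : Set X) ⊆ (C : Set X) →
    (μ B : Measure X) A * (μ C : Measure X) (B : Set X) = (μ C : Measure X) A

/-- A Souslin space: continuous image of a Polish (complete separable metrizable) space. -/
def SouslinSpace (α : Type*) [TopologicalSpace α] : Prop :=
  ∃ (β : Type) (t : TopologicalSpace β), @PolishSpace β t ∧
    ∃ f : β → α, @Continuous β α t _ f ∧ Function.Surjective f

/-- A Lusin space: continuous bijective image of a Polish space. -/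
def LusinSpace (α : Type*) [TopologicalSpace α] : Prop :=
  ∃ (β : Type) (t : TopologicalSpace β), @PolishSpace β t ∧
    ∃ f : β → α, @Continuous β α t _ f ∧ Function.Bijective f

/-!
A measure-theoretic section of a continuous surjection `f : β → X` from a Polish space makes every
probability measure on `X` a pushforward along `f`, so `Δ(X)` is Souslin (Lusin) as soon as `Δ(β)`
is Lusin. The latter holds because `β` embeds as a Borel subset of the Hilbert cube `Q`, which
identifies `Δ(β)` with the Borel set of measures in the Polish space `Δ(Q)` that charge only the
image. The section exists because, by Choquet's capacity argument, the images of countably many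
compact subsets of `β` fill `X` up to a null set, and over a compact set, parametrized by the
Cantor set, one selects the least element of each fibre.

The chain rule says that `μ(·|C)` restricted to `B` equals `μ(B|C) • μ(·|B)`. Since the Borel
σ-algebra of `X` is countably generated, this is countably many measurable conditions, and the
conditional probability systems form a Borel subset of the countable power `Δ(X)^𝓑`. Working with
Borel subsets takes the place of refining the topology of `X` to make the elements of `𝓑` clopen.
-/

theorem LusinSpace.of_polishSpace (β : Type) [TopologicalSpace β] [PolishSpace β] :
    LusinSpace β :=
  ⟨β, inferInstance, inferInstance, id, continuous_id, Function.bijective_id⟩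

theorem LusinSpace.souslinSpace {α : Type*} [TopologicalSpace α] (hα : LusinSpace α) :
    SouslinSpace α :=
  let ⟨β, t, hβ, f, hf, hbij⟩ := hα
  ⟨β, t, hβ, f, hf, hbij.surjective⟩

theorem exists_polishSpace_le_of_measurableSet {β : Type*} [TopologicalSpace β]
    [PolishSpace β] {s : Set β} (hs : MeasurableSet[borel β] s) :
    ∃ t : TopologicalSpace s, @PolishSpace s t ∧ t ≤ instTopologicalSpaceSubtype := by
  borelize β
  obtain ⟨t, hle, hpol, hclosed, -⟩ := hs.isClopenable
  exact ⟨@instTopologicalSpaceSubtype β _ t, @IsClosed.polishSpace β t hpol s hclosed,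
    induced_mono hle⟩

section SouslinLusin

variable {α α' : Type*} [TopologicalSpace α] [TopologicalSpace α']

theorem SouslinSpace.of_surjective (hα : SouslinSpace α) {g : α → α'} (hg : Continuous g)
    (hsurj : g.Surjective) : SouslinSpace α' := by
  obtain ⟨β, t, hβ, f, hf, hfs⟩ := hα
  exact ⟨β, t, hβ, g ∘ f, hg.comp hf, hsurj.comp hfs⟩

theorem LusinSpace.of_bijective (hα : LusinSpace α) {g : α → α'} (hg : Continuous g)
    (hbij : g.Bijective) : LusinSpace α' := by
  obtain ⟨β, t, hβ, f, hf, hfb⟩ := hα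
  exact ⟨β, t, hβ, g ∘ f, hg.comp hf, hbij.comp hfb⟩

theorem SouslinSpace.of_measurableSet (hα : SouslinSpace α) {s : Set α}
    (hs : MeasurableSet[borel α] s) : SouslinSpace s := by
  obtain ⟨β, t, hβ, f, hf, hsurj⟩ := hα
  obtain ⟨t', ht', hle⟩ := exists_polishSpace_le_of_measurableSet
    (hf.borel_measurable hs)
  exact ⟨_, t', ht', s.restrictPreimage f, continuous_le_dom hle hf.restrictPreimage,
    s.restrictPreimage_surjective hsurj⟩

theorem LusinSpace.of_measurableSet (hα : LusinSpace α) {s : Set α}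
    (hs : MeasurableSet[borel α] s) : LusinSpace s := by
  obtain ⟨β, t, hβ, f, hf, hbij⟩ := hα
  obtain ⟨t', ht', hle⟩ := exists_polishSpace_le_of_measurableSet
    (hf.borel_measurable hs)
  exact ⟨_, t', ht', s.restrictPreimage f, continuous_le_dom hle hf.restrictPreimage,
    s.restrictPreimage_bijective hbij⟩

variable {ι : Type*} [Countable ι] {E : ι → Type*} [∀ i, TopologicalSpace (E i)]

theorem SouslinSpace.pi (hE : ∀ i, SouslinSpace (E i)) : SouslinSpace (∀ i, E i) := by
  choose β t hβ f hf hsurj using hE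
  let e : Shrink.{0} ι ≃ ι := (equivShrink.{0} ι).symm
  have : Countable (Shrink.{0} ι) := e.injective.countable
  exact ⟨∀ j, β (e j), inferInstance, inferInstance,
    Homeomorph.piCongrLeft (Y := E) e ∘ Pi.map fun j => f (e j),
    (Homeomorph.continuous _).comp (Continuous.piMap fun j => hf (e j)),
    (Homeomorph.surjective _).comp (Function.Surjective.piMap fun j => hsurj (e j))⟩

theorem LusinSpace.pi (hE : ∀ i, LusinSpace (E i)) : LusinSpace (∀ i, E i) := by
  choose β t hβ f hf hbij using hE
  let e : Shrink.{0} ι ≃ ι := (equivShrink.{0} ι).symm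
  have : Countable (Shrink.{0} ι) := e.injective.countable
  exact ⟨∀ j, β (e j), inferInstance, inferInstance,
    Homeomorph.piCongrLeft (Y := E) e ∘ Pi.map fun j => f (e j),
    (Homeomorph.continuous _).comp (Continuous.piMap fun j => hf (e j)),
    (Homeomorph.bijective _).comp (Function.Bijective.piMap fun j => hbij (e j))⟩

end SouslinLusin

theorem SouslinSpace.exists_countable_isOpen_separating {α : Type*} [TopologicalSpace α]
    [T2Space α] (hα : SouslinSpace α) :
    ∃ S : Set (Set α), S.Countable ∧ (∀ U ∈ S, IsOpen U) ∧
      ∀ x y, (∀ U ∈ S, x ∈ U ↔ y ∈ U) → x = y := by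
  obtain ⟨β, t, hβ, f, hf, hsurj⟩ := hα
  let W := {p : β × β // f p.1 ≠ f p.2}
  -- `W` is second countable, hence Lindelöf, so countably many of these neighbourhoods cover it.
  choose U V hU hV hxU hyV hUV using fun p : W => t2_separation p.2
  have hnhds (p : W) : {q : W | f q.1.1 ∈ U p ∧ f q.1.2 ∈ V p} ∈ nhds p :=
    (((hU p).preimage (by fun_prop)).inter ((hV p).preimage (by fun_prop))).mem_nhds
      ⟨hxU p, hyV p⟩
  obtain ⟨C, hC, hcover⟩ := countable_cover_nhds hnhds
  refine ⟨U '' C, hC.image U, forall_mem_image.2 fun p _ => hU p, fun x y hxy => ?_⟩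
  by_contra hne
  obtain ⟨a, rfl⟩ := hsurj x
  obtain ⟨b, rfl⟩ := hsurj y
  have hmem : (⟨(a, b), hne⟩ : W) ∈ ⋃ p ∈ C, {q : W | f q.1.1 ∈ U p ∧ f q.1.2 ∈ V p} :=
    hcover ▸ mem_univ _
  obtain ⟨p, hp, haU, hbV⟩ := mem_iUnion₂.1 hmem
  exact (hUV p).notMem_of_mem_left ((hxy _ (mem_image_of_mem U hp)).1 haU) hbV

theorem SouslinSpace.countablyGenerated {α : Type*} [TopologicalSpace α] [T2Space α]
    [m : MeasurableSpace α] [BorelSpace α] (hα : SouslinSpace α) :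
    MeasurableSpace.CountablyGenerated α := by
  obtain ⟨S, hS, hopen, hsep⟩ := hα.exists_countable_isOpen_separating
  obtain ⟨β, t, hβ, f, hf, hsurj⟩ := hα
  borelize β
  have hle : MeasurableSpace.generateFrom S ≤ m :=
    MeasurableSpace.generateFrom_le fun U hU => (hopen U hU).measurableSet
  have hcsep : @MeasurableSpace.CountablySeparated α (MeasurableSpace.generateFrom S) :=
    @MeasurableSpace.CountablySeparated.mk α (MeasurableSpace.generateFrom S)
      ⟨S, hS, fun U hU => MeasurableSpace.measurableSet_generateFrom hU,
        fun x _ y _ h => hsep x y h⟩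
  -- By Lusin separation, `generateFrom S` is the largest σ-algebra making `f` measurable.
  have hmap := @Measurable.map_measurableSpace_eq β α _ _ (MeasurableSpace.generateFrom S) hcsep f
    (hf.measurable.mono le_rfl hle) hsurj
  have hge : m ≤ MeasurableSpace.generateFrom S := hmap ▸ hf.measurable.le_map
  exact ⟨S, hS, hge.antisymm hle⟩

section MeasurableSections

variable {X : Type*} [TopologicalSpace X] [T2Space X] [MeasurableSpace X] [OpensMeasurableSpace X]

theorem exists_measurable_rightInverse_of_isCompact_domain {L : Type*} [LinearOrder L]
    [TopologicalSpace L] [OrderTopology L] [SecondCountableTopology L] [MeasurableSpace L]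
    [BorelSpace L] {C : Set L} (hC : IsCompact C) {f : C → X} (hf : Continuous f)
    (hsurj : f.Surjective) : ∃ s : X → C, Measurable s ∧ Function.RightInverse s f := by
  have := isCompact_iff_compactSpace.1 hC
  have hleast (x : X) : ∃ t, IsLeast (f ⁻¹' {x}) t :=
    (isClosed_singleton.preimage hf).isCompact.exists_isLeast (hsurj x)
  choose s hs using hleast
  refine ⟨s, Measurable.subtype_mk (measurable_of_Iic fun a => ?_), fun x => (hs x).1⟩
  have hpre : (fun x => (s x : L)) ⁻¹' Iic a = f '' (Subtype.val ⁻¹' Iic a) :=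
    Subset.antisymm (fun x hx => ⟨s x, hx, (hs x).1⟩)
      (image_subset_iff.2 fun t (ht : (t : L) ≤ a) =>
        le_trans (Subtype.coe_le_coe.2 ((hs (f t)).2 rfl)) ht)
  rw [hpre]
  exact ((isClosed_Iic.preimage continuous_subtype_val).isCompact.image hf).measurableSet

theorem exists_measurable_rightInverse_of_compactSpace {K : Type*} [TopologicalSpace K]
    [CompactSpace K] [MetrizableSpace K] [MeasurableSpace K] [BorelSpace K] {f : K → X}
    (hf : Continuous f) (hsurj : f.Surjective) :
    ∃ s : X → K, Measurable s ∧ Function.RightInverse s f := by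
  rcases isEmpty_or_nonempty X with hX | hX
  · exact ⟨isEmptyElim, measurable_of_empty _, isEmptyElim⟩
  have : Nonempty K := hsurj.nonempty
  let _ := metrizableSpaceMetric K
  obtain ⟨g, hg, hgsurj⟩ := exists_nat_bool_continuous_surjective_of_compact K
  let h : cantorSet → K := g ∘ cantorSetHomeomorphNatToBool
  have hh : Continuous h := hg.comp (Homeomorph.continuous _)
  have hhsurj : h.Surjective := hgsurj.comp (Homeomorph.surjective _)
  obtain ⟨s, hs, hinv⟩ := exists_measurable_rightInverse_of_isCompact_domain isCompact_cantorSet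
    (hf.comp hh) (hsurj.comp hhsurj)
  exact ⟨h ∘ s, hh.measurable.comp hs, hinv⟩

theorem exists_measurable_rightInvOn_of_isCompact {β : Type*} [Nonempty β] [TopologicalSpace β]
    [MetrizableSpace β] [MeasurableSpace β] [BorelSpace β] {f : β → X} (hf : Continuous f)
    {K : Set β} (hK : IsCompact K) :
    ∃ s : X → β, Measurable s ∧ RightInvOn s f (f '' K) := by
  have := isCompact_iff_compactSpace.1 hK
  obtain ⟨s, hs, hinv⟩ := exists_measurable_rightInverse_of_compactSpace
    (hf.restrict (mapsTo_image f K)) imageFactorization_surjective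
  have himage : MeasurableSet (f '' K) := (hK.image hf).measurableSet
  obtain ⟨s', hs', hext⟩ := (MeasurableEmbedding.subtype_coe himage).exists_measurable_extend
    (measurable_subtype_coe.comp hs) fun _ => ‹Nonempty β›
  refine ⟨s', hs', fun x hx => ?_⟩
  have hsx : s' x = s ⟨x, hx⟩ := congrFun hext ⟨x, hx⟩
  rw [hsx]
  exact congrArg Subtype.val (hinv ⟨x, hx⟩)

end MeasurableSections

section CompactExhaustion

theorem isCompact_Iic_of_orderBot {α : Type*} [Preorder α] [OrderBot α] [TopologicalSpace α]
    [CompactIccSpace α] (a : α) : IsCompact (Iic a) :=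
  Icc_bot (a := a) ▸ isCompact_Icc

theorem exists_forall_lt_le_subset_of_Iic_subset {a : ℕ → ℕ} {V : Set (ℕ → ℕ)} (hV : IsOpen V)
    (ha : Iic a ⊆ V) : ∃ k, {x : ℕ → ℕ | ∀ i < k, x i ≤ a i} ⊆ V := by
  let _ := PiNat.metricSpaceNatNat
  obtain ⟨δ, hδ, hthick⟩ := (isCompact_Iic_of_orderBot a).exists_thickening_subset_open hV ha
  obtain ⟨k, hk⟩ := exists_pow_lt_of_lt_one hδ one_half_lt_one
  refine ⟨k, fun x hx => hthick (Metric.mem_thickening_iff.2 ⟨x ⊓ a, mem_Iic.2 inf_le_right, ?_⟩)⟩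
  have hcyl : x ∈ PiNat.cylinder (x ⊓ a) k := fun i hi => (inf_eq_left.2 (hx i hi)).symm
  exact (PiNat.mem_cylinder_iff_dist_le.1 hcyl).trans_lt hk

theorem exists_forall_lt_measure_image_forall_lt_le {X : Type*} [MeasurableSpace X]
    {μ : Measure X} {f : (ℕ → ℕ) → X} {c : ENNReal} (hc : c < μ (range f)) :
    ∃ a : ℕ → ℕ, ∀ k, c < μ (f '' {x | ∀ i < k, x i ≤ a i}) := by
  have hstep (k : ℕ) (D : Set (ℕ → ℕ)) (hD : c < μ (f '' D)) :
      ∃ m, c < μ (f '' (D ∩ {x | x k ≤ m})) := by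
    have hunion : f '' D = ⋃ m, f '' (D ∩ {x | x k ≤ m}) := by
      rw [← image_iUnion, ← inter_iUnion, iUnion_eq_univ_iff.2 fun x => ⟨x k, le_refl (x k)⟩,
        inter_univ]
    have hmono : Monotone fun m => f '' (D ∩ {x | x k ≤ m}) := fun m n hmn =>
      image_mono (inter_subset_inter_right D fun x hx => le_trans hx hmn)
    rw [hunion, hmono.measure_iUnion] at hD
    exact lt_iSup_iff.1 hD
  choose! g hg using hstep
  let T : ℕ → Set (ℕ → ℕ) := Nat.rec univ fun k D => D ∩ {x | x k ≤ g k D}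
  have hT (k : ℕ) : c < μ (f '' T k) := by
    induction k with
    | zero => rwa [← image_univ] at hc
    | succ k ih => exact hg k (T k) ih
  have hTanti : Antitone T := antitone_nat_of_succ_le fun k => inter_subset_left
  refine ⟨fun k => g k (T k), fun k => (hT k).trans_le (measure_mono (image_mono ?_))⟩
  exact fun x hx i hi => (hTanti (Nat.succ_le_of_lt hi) hx).2

theorem iInter_closure_image_subset_image_Iic {X : Type*} [TopologicalSpace X] [T2Space X]
    {f : (ℕ → ℕ) → X} (hf : Continuous f) (a : ℕ → ℕ) :
    ⋂ k, closure (f '' {x | ∀ i < k, x i ≤ a i}) ⊆ f '' Iic a := by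
  intro y hy
  by_contra hya
  obtain ⟨U, V, hU, hV, hsub, hyV, hUV⟩ :=
    ((isCompact_Iic_of_orderBot a).image hf).separation_of_notMem hya
  obtain ⟨k, hk⟩ := exists_forall_lt_le_subset_of_Iic_subset (hU.preimage hf)
    (image_subset_iff.1 hsub)
  obtain ⟨z, hzV, hz⟩ := mem_closure_iff.1 (mem_iInter.1 hy k) V hV hyV
  exact hUV.notMem_of_mem_left (image_subset_iff.2 hk hz) hzV

variable {X : Type*} [TopologicalSpace X] [T2Space X] [MeasurableSpace X] [OpensMeasurableSpace X]
  (μ : Measure X) [IsFiniteMeasure μ]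

theorem exists_le_measure_image_Iic {f : (ℕ → ℕ) → X} (hf : Continuous f) {c : ENNReal}
    (hc : c < μ (range f)) : ∃ a, c ≤ μ (f '' Iic a) := by
  obtain ⟨a, ha⟩ := exists_forall_lt_measure_image_forall_lt_le hc
  have hanti : Antitone fun k => closure (f '' {x | ∀ i < k, x i ≤ a i}) := fun k l hkl =>
    closure_mono (image_mono fun x hx i hi => hx i (hi.trans_le hkl))
  refine ⟨a, ?_⟩
  calc c ≤ ⨅ k, μ (closure (f '' {x | ∀ i < k, x i ≤ a i})) :=
        le_iInf fun k => (ha k).le.trans (measure_mono subset_closure)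
    _ = μ (⋂ k, closure (f '' {x | ∀ i < k, x i ≤ a i})) :=
        (hanti.measure_iInter (fun _ => isClosed_closure.nullMeasurableSet)
          ⟨0, measure_ne_top μ _⟩).symm
    _ ≤ μ (f '' Iic a) := measure_mono (iInter_closure_image_subset_image_Iic hf a)

theorem exists_isCompact_le_measure_image {β : Type*} [TopologicalSpace β] [PolishSpace β]
    {f : β → X} (hf : Continuous f) {c : ENNReal} (hc : c < μ (range f)) :
    ∃ K, IsCompact K ∧ c ≤ μ (f '' K) := by
  have : Nonempty β := by
    by_contra! hβ
    simp [range_eq_empty] at hc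
  obtain ⟨g, hg, hsurj⟩ := PolishSpace.exists_nat_nat_continuous_surjective β
  rw [← hsurj.range_comp] at hc
  obtain ⟨a, ha⟩ := exists_le_measure_image_Iic μ (hf.comp hg) hc
  exact ⟨g '' Iic a, (isCompact_Iic_of_orderBot a).image hg, by rwa [← image_comp]⟩

theorem exists_isCompact_ae_mem_iUnion_image {β : Type*} [TopologicalSpace β] [PolishSpace β]
    {f : β → X} (hf : Continuous f) (hsurj : f.Surjective) :
    ∃ K : ℕ → Set β, (∀ n, IsCompact (K n)) ∧ ∀ᵐ x ∂μ, ∃ n, x ∈ f '' K n := by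
  rcases eq_or_ne μ 0 with rfl | hμ
  · exact ⟨fun _ => ∅, fun _ => isCompact_empty, by simp⟩
  have hpos : 0 < μ univ := Measure.measure_univ_pos.2 hμ
  obtain ⟨c, -, hclt, hclim⟩ := exists_seq_strictMono_tendsto' hpos
  choose K hK hle using fun n =>
    exists_isCompact_le_measure_image μ hf (hsurj.range_eq ▸ (hclt n).2)
  refine ⟨K, hK, ?_⟩
  have hmeas : MeasurableSet (⋃ n, f '' K n) :=
    .iUnion fun n => ((hK n).image hf).measurableSet
  have huniv : μ univ ≤ μ (⋃ n, f '' K n) :=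
    le_of_tendsto' hclim fun n => (hle n).trans (measure_mono (subset_iUnion (f '' K ·) n))
  have hae := ae_eq_of_subset_of_measure_ge (subset_univ _) huniv hmeas.nullMeasurableSet
    (measure_ne_top μ _)
  filter_upwards [Filter.eventuallyEq_univ.1 hae] with x hx
  exact mem_iUnion.1 hx

end CompactExhaustion

theorem exists_measurable_ae_rightInverse {X β : Type*} [TopologicalSpace X] [T2Space X]
    [MeasurableSpace X] [OpensMeasurableSpace X] (μ : Measure X) [IsFiniteMeasure μ]
    [Nonempty β] [TopologicalSpace β] [PolishSpace β] [MeasurableSpace β] [BorelSpace β]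
    {f : β → X} (hf : Continuous f) (hsurj : f.Surjective) :
    ∃ s : X → β, Measurable s ∧ ∀ᵐ x ∂μ, f (s x) = x := by
  classical
  obtain ⟨K, hK, hae⟩ := exists_isCompact_ae_mem_iUnion_image μ hf hsurj
  choose s hs hinv using fun n => exists_measurable_rightInvOn_of_isCompact hf (hK n)
  let N : Set X := (⋃ n, f '' K n)ᶜ
  have hfind (x : X) : ∃ n, x ∈ f '' K n ∨ x ∈ N := by
    by_cases hx : ∃ n, x ∈ f '' K n
    · exact hx.imp fun _ => Or.inl
    · exact ⟨0, Or.inr (mt mem_iUnion.1 hx)⟩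
  have himage (n : ℕ) : MeasurableSet (f '' K n) := ((hK n).image hf).measurableSet
  refine ⟨fun x => s (Nat.find (hfind x)) x,
    Measurable.find (p := fun n x => x ∈ f '' K n ∨ x ∈ N) hs
      (fun n => (himage n).union (MeasurableSet.iUnion himage).compl) hfind, ?_⟩
  filter_upwards [hae] with x hx
  exact hinv _ ((Nat.find_spec (hfind x)).resolve_right (notMem_compl_iff.2 (mem_iUnion.2 hx)))

section ProbabilityMeasure

theorem map_probabilityMeasure_surjective {X β : Type*} [TopologicalSpace X] [T2Space X]
    [MeasurableSpace X] [BorelSpace X] [TopologicalSpace β] [PolishSpace β] [MeasurableSpace β]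
    [BorelSpace β] {f : β → X} (hf : Continuous f) (hsurj : f.Surjective) :
    (fun ν : ProbabilityMeasure β => ν.map hf.measurable.aemeasurable).Surjective := by
  intro μ
  have : Nonempty X := μ.nonempty
  have : Nonempty β := hsurj.nonempty
  obtain ⟨s, hs, hfs⟩ := exists_measurable_ae_rightInverse (μ : Measure X) hf hsurj
  refine ⟨μ.map hs.aemeasurable, Subtype.ext ?_⟩
  calc ((μ : Measure X).map s).map f = (μ : Measure X).map (f ∘ s) :=
        Measure.map_map hf.measurable hs
    _ = (μ : Measure X).map id := Measure.map_congr hfs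
    _ = μ := Measure.map_id

theorem map_probabilityMeasure_injective {X β : Type*} [MeasurableSpace X] [MeasurableSpace β]
    {f : β → X} (hf : MeasurableEmbedding f) :
    (fun ν : ProbabilityMeasure β => ν.map hf.measurable.aemeasurable).Injective :=
  fun _ _ h => Subtype.ext (hf.map_injective (congrArg Subtype.val h))

theorem measurable_coe_probabilityMeasure {X : Type*} [TopologicalSpace X]
    [HasOuterApproxClosed X] [MeasurableSpace X] [BorelSpace X]
    [MeasurableSpace (ProbabilityMeasure X)] [OpensMeasurableSpace (ProbabilityMeasure X)] :
    Measurable ((↑) : ProbabilityMeasure X → Measure X) := by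
  refine Measurable.measure_of_isPiSystem_of_isProbabilityMeasure
    (BorelSpace.measurable_eq.trans borel_eq_generateFrom_isClosed) isPiSystem_isClosed
    fun F hF => ?_
  exact measurable_of_tendsto_metrizable
    (fun n => (ProbabilityMeasure.continuous_lintegral_boundedContinuousFunction
      (hF.apprSeq n)).measurable)
    (tendsto_pi_nhds.2 fun μ => HasOuterApproxClosed.tendsto_lintegral_apprSeq hF μ)

open Filter Topology in
theorem isEmbedding_map_probabilityMeasure {X Y : Type*} [TopologicalSpace X] [MeasurableSpace X]
    [OpensMeasurableSpace X] [TopologicalSpace Y] [MetrizableSpace Y] [SeparableSpace Y]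
    [MeasurableSpace Y] [BorelSpace Y] {e : X → Y} (he : IsEmbedding e)
    (hem : MeasurableEmbedding e) :
    IsEmbedding fun ν : ProbabilityMeasure X => ν.map he.continuous.measurable.aemeasurable := by
  let pushforward (ν : ProbabilityMeasure X) : ProbabilityMeasure Y :=
    ν.map he.continuous.measurable.aemeasurable
  refine ⟨isInducing_iff_nhds.2 fun ν => le_antisymm ?_ ?_, map_probabilityMeasure_injective hem⟩
  · exact ((ProbabilityMeasure.continuous_map he.continuous).tendsto ν).le_comap
  let _ := metrizableSpaceMetric Y
  refine tendsto_id'.1 (tendsto_of_forall_isOpen_le_liminf' fun G hG => ?_)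
  obtain ⟨U, hU, rfl⟩ := he.isOpen_iff.1 hG
  have hliminf := ProbabilityMeasure.le_liminf_measure_open_of_tendsto
    (tendsto_comap (f := pushforward) (x := 𝓝 (pushforward ν))) hU
  simpa only [pushforward, ProbabilityMeasure.toMeasure_map, hem.map_apply,
    Function.comp_def, id_eq] using hliminf

theorem range_map_probabilityMeasure {X Y : Type*} [MeasurableSpace X] [MeasurableSpace Y]
    {e : X → Y} (he : MeasurableEmbedding e) :
    range (fun ν : ProbabilityMeasure X => ν.map he.measurable.aemeasurable) =
      {μ : ProbabilityMeasure Y | (μ : Measure Y) (range e) = 1} := by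
  ext μ
  constructor
  · rintro ⟨ν, rfl⟩
    simp [he.map_apply]
  · intro hμ
    have hae := (mem_ae_iff_prob_eq_one he.measurableSet_range).2 hμ
    refine ⟨⟨Measure.comap e μ, he.isProbabilityMeasure_comap hae⟩, Subtype.ext ?_⟩
    exact (he.map_comap _).trans (Measure.restrict_eq_self_of_ae_mem hae)

theorem polishSpace_probabilityMeasure_of_compactSpace (K : Type*) [TopologicalSpace K]
    [CompactSpace K] [MetrizableSpace K] [MeasurableSpace K] [BorelSpace K] :
    PolishSpace (ProbabilityMeasure K) := by
  let _ := metrizableSpaceMetric (ProbabilityMeasure K)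
  infer_instance

theorem lusinSpace_probabilityMeasure_of_polishSpace (β : Type*) [TopologicalSpace β]
    [PolishSpace β] [MeasurableSpace β] [BorelSpace β] : LusinSpace (ProbabilityMeasure β) := by
  let _ := upgradeIsCompletelyMetrizable β
  obtain ⟨e, he⟩ := Metric.PiNatEmbed.exists_embedding_to_hilbert_cube (X := β)
  have hem : MeasurableEmbedding e := he.continuous.measurableEmbedding he.injective
  have := polishSpace_probabilityMeasure_of_compactSpace (ℕ → unitInterval)
  borelize (ProbabilityMeasure (ℕ → unitInterval))
  have hrange : MeasurableSet
      {μ : ProbabilityMeasure (ℕ → unitInterval) | (μ : Measure _) (range e) = 1} :=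
    (Measure.measurable_coe hem.measurableSet_range).comp measurable_coe_probabilityMeasure
      (measurableSet_singleton 1)
  rw [← range_map_probabilityMeasure hem] at hrange
  let h := (isEmbedding_map_probabilityMeasure he hem).toHomeomorph
  exact ((LusinSpace.of_polishSpace _).of_measurableSet hrange).of_bijective
    h.symm.continuous h.symm.bijective

theorem SouslinSpace.probabilityMeasure {X : Type*} [TopologicalSpace X] [T2Space X]
    [MeasurableSpace X] [BorelSpace X] (hX : SouslinSpace X) :
    SouslinSpace (ProbabilityMeasure X) := by
  obtain ⟨β, t, hβ, f, hf, hsurj⟩ := hX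
  borelize β
  exact (lusinSpace_probabilityMeasure_of_polishSpace β).souslinSpace.of_surjective
    (ProbabilityMeasure.continuous_map hf) (map_probabilityMeasure_surjective hf hsurj)

theorem LusinSpace.probabilityMeasure {X : Type*} [TopologicalSpace X] [T2Space X]
    [MeasurableSpace X] [BorelSpace X] (hX : LusinSpace X) :
    LusinSpace (ProbabilityMeasure X) := by
  obtain ⟨β, t, hβ, f, hf, hbij⟩ := hX
  borelize β
  exact (lusinSpace_probabilityMeasure_of_polishSpace β).of_bijective
    (ProbabilityMeasure.continuous_map hf)
    ⟨map_probabilityMeasure_injective (hf.measurableEmbedding hbij.injective),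
      map_probabilityMeasure_surjective hf hbij.surjective⟩

end ProbabilityMeasure

section CPS

theorem measurableSet_eq_measure {P X : Type*} [MeasurableSpace P] [mX : MeasurableSpace X]
    [MeasurableSpace.CountablyGenerated X] {κ η : P → Measure X} [∀ p, IsFiniteMeasure (κ p)]
    (hκ : Measurable κ) (hη : Measurable η) : MeasurableSet {p | κ p = η p} := by
  let 𝓐 := generateSetAlgebra (MeasurableSpace.countableGeneratingSet X)
  have h𝓐 : IsSetAlgebra 𝓐 := isSetAlgebra_generateSetAlgebra
  have hgen : mX = MeasurableSpace.generateFrom 𝓐 := by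
    rw [generateFrom_generateSetAlgebra_eq, MeasurableSpace.generateFrom_countableGeneratingSet]
  have hmeas {A : Set X} (hA : A ∈ 𝓐) : MeasurableSet A :=
    hgen ▸ MeasurableSpace.measurableSet_generateFrom hA
  have heq : {p | κ p = η p} = ⋂ A ∈ 𝓐, {p | κ p A = η p A} := by
    ext p
    simp only [mem_iInter]
    refine ⟨fun (h : κ p = η p) A _ => DFunLike.congr_fun h A, fun h => ?_⟩
    exact ext_of_generate_finite 𝓐 hgen (fun _ hA _ hB _ => h𝓐.inter_mem hA hB) (fun A hA => h A hA)
      (h univ h𝓐.univ_mem)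
  rw [heq]
  exact .biInter (countable_generateSetAlgebra (MeasurableSpace.countable_countableGeneratingSet))
    fun A hA => measurableSet_eq_fun ((Measure.measurable_coe (hmeas hA)).comp hκ)
      ((Measure.measurable_coe (hmeas hA)).comp hη)

variable {X : Type*} [MeasurableSpace X] {𝓑 : Set (Set X)}

theorem isCPS_iff (h𝓑m : ∀ B ∈ 𝓑, MeasurableSet B) {μ : 𝓑 → ProbabilityMeasure X} :
    IsCPS 𝓑 μ ↔ (∀ B : 𝓑, (μ B : Measure X) B = 1) ∧ ∀ B C : 𝓑, (B : Set X) ⊆ C →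
      (μ C : Measure X).restrict B = (μ C : Measure X) B • (μ B : Measure X) := by
  refine and_congr_right fun hone => ⟨fun hchain B C hBC => ?_, fun hchain A B C _ hAB hBC => ?_⟩
  · ext A hA
    have hB := h𝓑m B B.2
    have hconc : (μ B : Measure X).restrict B = μ B :=
      Measure.restrict_eq_self_of_ae_mem ((mem_ae_iff_prob_eq_one hB).2 (hone B))
    calc (μ C : Measure X).restrict B A = (μ C : Measure X) (A ∩ B) := Measure.restrict_apply hA
      _ = (μ B : Measure X) (A ∩ B) * (μ C : Measure X) B :=
        (hchain (A ∩ B) B C (hA.inter hB) inter_subset_right hBC).symm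
      _ = (μ C : Measure X) B * (μ B : Measure X) A := by
        rw [← Measure.restrict_apply hA, hconc, mul_comm]
  · calc (μ B : Measure X) A * (μ C : Measure X) B
        = ((μ C : Measure X) B • (μ B : Measure X)) A := mul_comm _ _
      _ = (μ C : Measure X).restrict B A := by rw [hchain B C hBC]
      _ = (μ C : Measure X) A := Measure.restrict_eq_self _ hAB

theorem measurableSet_isCPS [MeasurableSpace.CountablyGenerated X] (h𝓑c : 𝓑.Countable)
    (h𝓑m : ∀ B ∈ 𝓑, MeasurableSet B) {P : Type*} [MeasurableSpace P]
    {κ : P → 𝓑 → ProbabilityMeasure X} (hκ : ∀ B, Measurable fun p => (κ p B : Measure X)) :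
    MeasurableSet {p | IsCPS 𝓑 (κ p)} := by
  have := h𝓑c.to_subtype
  have heval (B C : 𝓑) : Measurable fun p => (κ p C : Measure X) B :=
    (Measure.measurable_coe (h𝓑m B B.2)).comp (hκ C)
  simp only [isCPS_iff h𝓑m, ofPred_and, ofPred_forall]
  refine .inter (.iInter fun B => heval B B (measurableSet_singleton 1))
    (.iInter fun B => .iInter fun C => .iInter fun _ => measurableSet_eq_measure ?_ ?_)
  · refine Measure.measurable_of_measurable_coe _ fun A hA => ?_
    simp only [Measure.restrict_apply hA]
    exact (Measure.measurable_coe (hA.inter (h𝓑m B B.2))).comp (hκ C)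
  · exact Measure.measurable_of_measurable_coe _ fun A hA =>
      (heval B C).mul ((Measure.measurable_coe hA).comp (hκ B))

end CPS

theorem cps_souslin_lusin_general {X : Type*} [TopologicalSpace X] [T2Space X]
    [HasOuterApproxClosed X] [MeasurableSpace X] [BorelSpace X] (hX : SouslinSpace X)
    (𝓑 : Set (Set X)) (h𝓑c : 𝓑.Countable) (h𝓑m : ∀ B ∈ 𝓑, MeasurableSet B) :
    SouslinSpace {μ : 𝓑 → ProbabilityMeasure X // IsCPS 𝓑 μ} ∧
      (LusinSpace X → LusinSpace {μ : 𝓑 → ProbabilityMeasure X // IsCPS 𝓑 μ}) := by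
  have := h𝓑c.to_subtype
  have := hX.countablyGenerated
  borelize (ProbabilityMeasure X) (𝓑 → ProbabilityMeasure X)
  have hcps : MeasurableSet {μ : 𝓑 → ProbabilityMeasure X | IsCPS 𝓑 μ} :=
    measurableSet_isCPS h𝓑c h𝓑m fun B =>
      measurable_coe_probabilityMeasure.comp (continuous_apply B).measurable
  exact ⟨(SouslinSpace.pi fun _ => hX.probabilityMeasure).of_measurableSet hcps,
    fun hX => (LusinSpace.pi fun _ => hX.probabilityMeasure).of_measurableSet hcps⟩

/-- For a metrizable Souslin space `X` and countable family `𝓑` of conditioning events,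
`Δ^𝓑(X)` is Souslin; if moreover `X` is Lusin, `Δ^𝓑(X)` is Lusin (no clopenness needed). -/
theorem cps_souslin_lusin {X : Type*} [TopologicalSpace X] [MetrizableSpace X]
    [MeasurableSpace X] [BorelSpace X]
    (hX : SouslinSpace X)
    (𝓑 : Set (Set X)) (h𝓑ne : 𝓑.Nonempty) (h𝓑c : 𝓑.Countable)
    (h𝓑m : ∀ B ∈ 𝓑, MeasurableSet B) (hempty : ∅ ∉ 𝓑) :
    SouslinSpace {μ : 𝓑 → ProbabilityMeasure X // IsCPS 𝓑 μ} ∧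
      (LusinSpace X → LusinSpace {μ : 𝓑 → ProbabilityMeasure X // IsCPS 𝓑 μ}) :=
  cps_souslin_lusin_general hX 𝓑 h𝓑c h𝓑m
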